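/- In dimension n = 1, if g is integrable with ∫_ℝ g dx ≠ 0, then the H^{-1} norm of g is infinite: sup over f ∈ C_0^∞(ℝ) of (∫ g f dx - ½‖f'‖_2²) = +∞. -/

import Mathlib

open MeasureTheory

/-- In dimension one, if `g` is integrable with `∫ g ≠ 0`, then the `H^{-1}`
norm of `g` is infinite:
`sup_{f ∈ C_0^∞(ℝ)} (∫ g f dx - ½ ‖f'‖_2²) = +∞`. -/
theorem Hneg1_infinite_of_integral_ne_zero
    (g : ℝ → ℝ) (hg : Integrable g) (hgint : (∫ x, g x) ≠ 0) :
    (⨆ f : {f : ℝ → ℝ // ContDiff ℝ (⊤ : ℕ∞) f ∧ HasCompactSupport f},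
        (((∫ x, g x * (f : ℝ → ℝ) x) -
          (1 / 2) * ∫ x, (deriv (f : ℝ → ℝ) x) ^ 2 : ℝ) : EReal)) = ⊤ := by
  let b : ContDiffBump (0 : ℝ) := ⟨1, 2, one_pos, by norm_num⟩
  obtain ⟨φ, hφ, hφs, hφ0, hφ1⟩ : ∃ φ : ℝ → ℝ, ContDiff ℝ (⊤ : ℕ∞) φ ∧ HasCompactSupport φ ∧
      φ 0 = 1 ∧ ∀ x, ‖φ x‖ ≤ 1 := by
    refine ⟨b, b.contDiff, b.hasCompactSupport, b.one_of_mem_closedBall ?_, fun x => ?_⟩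
    · simp [b]
    · rw [Real.norm_eq_abs, abs_of_nonneg b.nonneg]
      exact b.le_one
  have hd : Differentiable ℝ φ := hφ.differentiable (by simp)
  rw [EReal.eq_top_iff_forall_lt]
  intro M
  set I := ∫ x, g x with hI
  let c : ℝ := (M + 1) / I
  have hcI : c * I = M + 1 := div_mul_cancel₀ _ hgint
  have h1 : Filter.Tendsto (fun r : ℝ => ∫ x, g x * (c * φ (x * r))) (nhdsWithin 0 (Set.Ioi 0))
      (nhds (∫ x, g x * (c * 1))) := by
    refine tendsto_integral_filter_of_dominated_convergence (fun x => ‖g x‖ * |c|) ?_ ?_ ?_ ?_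
    · refine Filter.Eventually.of_forall fun r => hg.aestronglyMeasurable.mul ?_
      have := hφ.continuous
      exact Continuous.aestronglyMeasurable (by fun_prop)
    · refine Filter.Eventually.of_forall fun r => Filter.Eventually.of_forall fun x => ?_
      rw [norm_mul, norm_mul, Real.norm_eq_abs c]
      have := mul_le_mul_of_nonneg_left (hφ1 (x * r)) (abs_nonneg c)
      rw [mul_one] at this
      gcongr
    · exact hg.norm.mul_const _
    · refine Filter.Eventually.of_forall fun x => ?_
      have : Continuous (fun r => g x * (c * φ (x * r))) := by
        have := hφ.continuous
        fun_prop
      have h := this.tendsto 0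
      simp only [mul_zero, hφ0] at h
      exact h.mono_left nhdsWithin_le_nhds
  set A := ∫ x, (deriv φ x) ^ 2
  have h2 : Filter.Tendsto (fun r : ℝ => (1 / 2) * (c ^ 2 * r * A)) (nhdsWithin 0 (Set.Ioi 0))
      (nhds 0) := by
    have : Continuous (fun r : ℝ => (1 / 2) * (c ^ 2 * r * A)) := by fun_prop
    have h := this.tendsto 0
    simp only [mul_zero, zero_mul] at h
    exact h.mono_left nhdsWithin_le_nhds
  have h3 := h1.sub h2
  have hlim : M < (∫ x, g x * (c * 1)) - 0 := by
    rw [integral_mul_const, ← hI]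
    linarith
  obtain ⟨r, hr, hr0⟩ := ((h3.eventually (lt_mem_nhds hlim)).and self_mem_nhdsWithin).exists
  have hr0 : 0 < r := hr0
  have hder : ∀ x, deriv (fun x => c * φ (x * r)) x = c * (deriv φ (x * r) * r) := by
    intro x
    have h := (hd (x * r)).hasDerivAt.comp x ((hasDerivAt_id x).mul_const r)
    simpa using (h.const_mul c).deriv
  have hint : ∫ x, (deriv (fun x => c * φ (x * r)) x) ^ 2 = c ^ 2 * r * A := by
    have : ∀ x, (deriv (fun x => c * φ (x * r)) x) ^ 2
        = (c ^ 2 * r ^ 2) * (fun y => (deriv φ y) ^ 2) (x * r) := by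
      intro x
      rw [hder]
      ring
    simp_rw [this]
    rw [integral_const_mul, Measure.integral_comp_mul_right (fun y => (deriv φ y) ^ 2),
      abs_of_pos (inv_pos.2 hr0), smul_eq_mul]
    field_simp
    rfl
  have hsupp : HasCompactSupport (fun x => c * φ (x * r)) := by
    have := hφs.comp_homeomorph (Homeomorph.mulRight₀ r hr0.ne')
    exact HasCompactSupport.mul_left (f := fun _ => c) this
  have hsm : ContDiff ℝ (⊤ : ℕ∞) (fun x => c * φ (x * r)) :=
    contDiff_const.mul (hφ.comp (contDiff_id.mul contDiff_const))
  refine lt_of_lt_of_le ?_ (le_iSup _ ⟨fun x => c * φ (x * r), hsm, hsupp⟩)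
  rw [EReal.coe_lt_coe_iff]
  simp only
  rw [hint]
  exact hr
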